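/- arXiv:1308.5695 — 3 statements merged into one kernel-verified Lean document; each statement's English description precedes it below -/
import Mathlib

section
/- Let n ≥ 1 and q < 0. Let μ be a Borel measure on ℝⁿ which is both q-complemented concave and q-homogeneous, and let ‖·‖_K be a semi-norm on ℝⁿ with open unit ball K such that μ(ℝⁿ∖K) < ∞. Then for every Borel set C ⊆ ℝⁿ with μ(C) < ∞, μ⁻_K(C) ≥ −(1/q)·μ(ℝⁿ∖K)^q·μ(C)^{1−q}, and for every t > 0 equality holds for C = ℝⁿ∖(tK); i.e., complements of homothetic copies of K are isoperimetric minimizers. -/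
open MeasureTheory Set Filter
open scoped Pointwise ENNReal Topology

/-- The inner measure induced by a measure `μ`. -/
noncomputable def innerMeasure {α : Type*} [MeasurableSpace α] (μ : Measure α) (S : Set α) :
    ℝ≥0∞ :=
  ⨆ (F : Set α) (_ : MeasurableSet F) (_ : F ⊆ S), μ F

/-- The (outer) Minkowski boundary measure of `A` with respect to the "unit ball" `K`. -/
noncomputable def mBoundary {n : ℕ} (μ : Measure (Fin n → ℝ)) (K A : Set (Fin n → ℝ)) :
    ℝ≥0∞ :=
  Filter.liminf (fun ε : ℝ => μ ((A + ε • K) \ A) / ENNReal.ofReal ε) (𝓝[>] (0 : ℝ))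

/-- The inner Minkowski boundary measure `μ⁻_K(C) := μ⁺_K(ℝⁿ \ C)`. -/
noncomputable def mInnerBoundary {n : ℕ} (μ : Measure (Fin n → ℝ)) (K C : Set (Fin n → ℝ)) :
    ℝ≥0∞ :=
  mBoundary μ K Cᶜ

/-!
Homogeneity makes `A ↦ μ Aᶜ ^ q` commute with dilations, so complemented concavity becomes the
Brunn–Minkowski type inequality `μ (A + B)ᶜ ≤ (μ Aᶜ ^ q + μ Bᶜ ^ q) ^ (1 / q)`, with equality when
`A` and `B` are dilates of one convex set `K`. Take `A = Cᶜ` and `B = ε • K`: the measure gained by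
the enlargement is at least `μ C - (μ C ^ q + ε * μ Kᶜ ^ q) ^ (1 / q)`. Dividing by `ε` and letting
`ε → 0⁺`, the right-hand side has limit `-(1 / q) * μ Kᶜ ^ q * μ C ^ (1 - q)`. For `C = (t • K)ᶜ`
every step is an equality.
-/

section InnerMeasure

variable {α : Type*} [MeasurableSpace α] {μ : Measure α}

theorem measure_le_innerMeasure {F S : Set α} (hF : MeasurableSet F) (hFS : F ⊆ S) :
    μ F ≤ innerMeasure μ S :=
  le_iSup₂_of_le F hF <| le_iSup_of_le hFS le_rfl

theorem measure_sub_innerMeasure_compl_le {C : Set α} (hC : MeasurableSet C) (S : Set α) :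
    μ C - innerMeasure μ Sᶜ ≤ μ (S \ Cᶜ) := by
  rw [sdiff_compl, tsub_le_iff_right]
  set T := toMeasurable μ (S ∩ C)
  have hT : MeasurableSet T := measurableSet_toMeasurable _ _
  have hsub : C \ T ⊆ Sᶜ := fun x hx hxS => hx.2 (subset_toMeasurable _ _ ⟨hxS, hx.1⟩)
  calc
    μ C ≤ μ (C ∩ T) + μ (C \ T) := measure_le_inter_add_sdiff μ C T
    _ ≤ μ T + innerMeasure μ Sᶜ :=
      add_le_add (measure_mono inter_subset_right)
        (measure_le_innerMeasure (hC.diff hT) hsub)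
    _ = μ (S ∩ C) + innerMeasure μ Sᶜ := by rw [measure_toMeasurable]

end InnerMeasure

section DifferenceQuotient

theorem tendsto_rpow_sub_rpow_add_mul_div {s : ℝ} (hs : s ≠ 0) (b p : ℝ) :
    Tendsto (fun ε : ℝ => (s ^ p - (s + ε * b) ^ p) / ε) (𝓝[>] 0)
      (𝓝 (-p * b * s ^ (p - 1))) := by
  have hlin : HasDerivAt (fun ε : ℝ => s + ε * b) b 0 := by
    simpa using ((hasDerivAt_id (0 : ℝ)).mul_const b).const_add s
  have hslope :=
    (hlin.rpow_const (p := p) (Or.inl (by simpa using hs))).tendsto_slope_zero_right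
  convert hslope.neg using 2
  · simp only [zero_add, zero_mul, add_zero, smul_eq_mul]
    ring
  · simp only [zero_mul, add_zero]
    ring

theorem tendsto_ofReal_sub_rpow_add_mul_rpow_div {q a b : ℝ} (hq : q < 0) (ha : 0 < a)
    (hb : 0 ≤ b) :
    Tendsto (fun ε : ℝ => (ENNReal.ofReal a -
        (ENNReal.ofReal a ^ q + ENNReal.ofReal ε * ENNReal.ofReal b) ^ (1 / q)) /
          ENNReal.ofReal ε)
      (𝓝[>] 0)
      (𝓝 (ENNReal.ofReal (-(1 / q)) * ENNReal.ofReal b * ENNReal.ofReal a ^ (1 - q))) := by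
  have haq : 0 < a ^ q := Real.rpow_pos_of_pos ha q
  have hp : 0 ≤ -(1 / q) := by linarith [one_div_neg.2 hq]
  have hlim := ENNReal.tendsto_ofReal (tendsto_rpow_sub_rpow_add_mul_div haq.ne' b (1 / q))
  rw [← Real.rpow_mul ha.le, ← Real.rpow_mul ha.le, mul_sub, mul_one_div_cancel hq.ne,
    Real.rpow_one, mul_one, ENNReal.ofReal_mul (mul_nonneg hp hb), ENNReal.ofReal_mul hp,
    ← ENNReal.ofReal_rpow_of_pos ha] at hlim
  refine hlim.congr' ?_
  filter_upwards [self_mem_nhdsWithin] with ε (hε : 0 < ε)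
  have hsum : 0 < a ^ q + ε * b := by positivity
  rw [ENNReal.ofReal_rpow_of_pos ha, ← ENNReal.ofReal_mul hε.le,
    ← ENNReal.ofReal_add haq.le (by positivity), ENNReal.ofReal_rpow_of_pos hsum,
    ← ENNReal.ofReal_sub _ (by positivity), ENNReal.ofReal_div_of_pos hε]

/-- `b` plays the role of `μ Kᶜ ^ q`, which is `⊤` when `Kᶜ` is a null set. -/
theorem tendsto_sub_rpow_add_mul_rpow_div {q : ℝ} (hq : q < 0) {a : ℝ≥0∞} (ha : a ≠ ⊤) (b : ℝ≥0∞) :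
    Tendsto
      (fun ε : ℝ => (a - (a ^ q + ENNReal.ofReal ε * b) ^ (1 / q)) / ENNReal.ofReal ε)
      (𝓝[>] 0) (𝓝 (ENNReal.ofReal (-(1 / q)) * b * a ^ (1 - q))) := by
  have hp : 1 / q < 0 := one_div_neg.2 hq
  have hq1 : 0 < 1 - q := by linarith
  obtain rfl | ha0 := eq_or_ne a 0
  · simp [ENNReal.zero_rpow_of_pos hq1]
  obtain rfl | hb := eq_or_ne b ⊤
  · have hlimit : ENNReal.ofReal (-(1 / q)) * ⊤ * a ^ (1 - q) = ⊤ := by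
      rw [ENNReal.mul_top (ENNReal.ofReal_pos.2 (neg_pos.2 hp)).ne',
        ENNReal.top_mul (ENNReal.rpow_pos (pos_iff_ne_zero.2 ha0) ha).ne']
    have hε : Tendsto ENNReal.ofReal (𝓝[>] 0) (𝓝 0) :=
      (ENNReal.continuous_ofReal.tendsto' 0 0 ENNReal.ofReal_zero).mono_left nhdsWithin_le_nhds
    have hdiv := ENNReal.Tendsto.const_div (a := a) hε (Or.inr ha)
    rw [ENNReal.div_zero ha0] at hdiv
    rw [hlimit]
    refine hdiv.congr' ?_
    filter_upwards [self_mem_nhdsWithin] with ε hε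
    rw [ENNReal.mul_top (ENNReal.ofReal_pos.2 hε).ne', add_top, ENNReal.top_rpow_of_neg hp,
      tsub_zero]
  · simpa only [ENNReal.ofReal_toReal ha, ENNReal.ofReal_toReal hb] using
      tendsto_ofReal_sub_rpow_add_mul_rpow_div hq (ENNReal.toReal_pos ha0 ha) (b := b.toReal)
        ENNReal.toReal_nonneg

end DifferenceQuotient

section ComplementedConcave

variable {E : Type*} [AddCommGroup E] [Module ℝ E] [MeasurableSpace E]

/-- `q`-complemented concavity of a measure: a Brunn–Minkowski inequality for complements of
sets. Inner measure is used since the Minkowski sum of two measurable sets may fail to be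
measurable. -/
def IsComplementedConcave (q : ℝ) (μ : Measure E) : Prop :=
  ∀ lam ∈ Ioo (0 : ℝ) 1, ∀ A B : Set E,
    MeasurableSet A → MeasurableSet B → μ Aᶜ < ⊤ → μ Bᶜ < ⊤ →
    innerMeasure μ ((lam • A + (1 - lam) • B)ᶜ) ≤
      (ENNReal.ofReal lam * μ Aᶜ ^ q + ENNReal.ofReal (1 - lam) * μ Bᶜ ^ q) ^ (1 / q)

/-- `q`-homogeneity of a measure: dilation by `c` multiplies it by `c ^ (1 / q)`, so that
`A ↦ μ A ^ q` is homogeneous of degree one. -/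
def IsHomogeneousMeasure (q : ℝ) (μ : Measure E) : Prop :=
  ∀ A : Set E, MeasurableSet A → ∀ c : ℝ, 0 < c → μ (c • A) = ENNReal.ofReal (c ^ (1 / q)) * μ A

variable {q : ℝ} {μ : Measure E} {A B K : Set E} {c : ℝ}

namespace IsHomogeneousMeasure

theorem measure_compl_smul (hhom : IsHomogeneousMeasure q μ) (hA : MeasurableSet A)
    (hc : 0 < c) : μ (c • A)ᶜ = ENNReal.ofReal (c ^ (1 / q)) * μ Aᶜ := by
  rw [← hhom Aᶜ hA.compl c hc]
  exact congrArg μ (smul_set_compl (a := Units.mk0 c hc.ne')).symm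

theorem measure_compl_smul_lt_top (hhom : IsHomogeneousMeasure q μ) (hA : MeasurableSet A)
    (hAfin : μ Aᶜ < ⊤) (hc : 0 < c) : μ (c • A)ᶜ < ⊤ := by
  rw [hhom.measure_compl_smul hA hc]
  exact ENNReal.mul_lt_top ENNReal.ofReal_lt_top hAfin

theorem measure_compl_smul_rpow (hhom : IsHomogeneousMeasure q μ) (hq : q ≠ 0)
    (hA : MeasurableSet A) (hc : 0 < c) :
    μ (c • A)ᶜ ^ q = ENNReal.ofReal c * μ Aᶜ ^ q := by
  have hcq : 0 < c ^ (1 / q) := Real.rpow_pos_of_pos hc _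
  have hne : ENNReal.ofReal (c ^ (1 / q)) ≠ 0 := (ENNReal.ofReal_pos.2 hcq).ne'
  rw [hhom.measure_compl_smul hA hc, ENNReal.mul_rpow_eq_ite,
    if_neg (by simp only [hne, ENNReal.ofReal_ne_top, false_and, or_self, not_false_iff]),
    ENNReal.ofReal_rpow_of_pos hcq, ← Real.rpow_mul hc.le, one_div_mul_cancel hq, Real.rpow_one]

theorem measure_compl_smul_add_smul (hhom : IsHomogeneousMeasure q μ) (hq : q ≠ 0)
    (hK : MeasurableSet K) (hKconv : Convex ℝ K) {s t : ℝ} (hs : 0 < s) (ht : 0 < t) :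
    μ (s • K + t • K)ᶜ = (μ (s • K)ᶜ ^ q + μ (t • K)ᶜ ^ q) ^ (1 / q) := by
  rw [hhom.measure_compl_smul_rpow hq hK hs, hhom.measure_compl_smul_rpow hq hK ht, ← add_mul,
    ← ENNReal.ofReal_add hs.le ht.le, ← hKconv.add_smul hs.le ht.le,
    ← hhom.measure_compl_smul_rpow hq hK (add_pos hs ht), one_div, ENNReal.rpow_rpow_inv hq]

end IsHomogeneousMeasure

/-- Applying concavity to the dilates `2 • A` and `2 • B` turns it into an additive inequality. -/
theorem IsComplementedConcave.innerMeasure_compl_add_le [MeasurableConstSMul ℝ E]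
    (hcc : IsComplementedConcave q μ) (hhom : IsHomogeneousMeasure q μ) (hq : q ≠ 0)
    (hA : MeasurableSet A) (hB : MeasurableSet B) (hAfin : μ Aᶜ < ⊤) (hBfin : μ Bᶜ < ⊤) :
    innerMeasure μ (A + B)ᶜ ≤ (μ Aᶜ ^ q + μ Bᶜ ^ q) ^ (1 / q) := by
  have h2 : (0 : ℝ) < 2 := two_pos
  have hcancel (m : ℝ≥0∞) : ENNReal.ofReal 2⁻¹ * (ENNReal.ofReal 2 * m) = m := by
    rw [← mul_assoc, ← ENNReal.ofReal_mul (by norm_num), inv_mul_cancel₀ h2.ne',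
      ENNReal.ofReal_one, one_mul]
  have hconc := hcc 2⁻¹ ⟨by norm_num, by norm_num⟩ ((2 : ℝ) • A) ((2 : ℝ) • B)
    (hA.const_smul_of_ne_zero h2.ne') (hB.const_smul_of_ne_zero h2.ne')
    (hhom.measure_compl_smul_lt_top hA hAfin h2) (hhom.measure_compl_smul_lt_top hB hBfin h2)
  rwa [show (1 : ℝ) - 2⁻¹ = 2⁻¹ by norm_num, inv_smul_smul₀ h2.ne', inv_smul_smul₀ h2.ne',
    hhom.measure_compl_smul_rpow hq hA h2, hhom.measure_compl_smul_rpow hq hB h2, hcancel,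
    hcancel] at hconc

end ComplementedConcave

section Sublinear

variable {E : Type*} [AddCommGroup E] [Module ℝ E] {N : E → ℝ}

theorem convexOn_univ_of_sublinear (hNadd : ∀ x y, N (x + y) ≤ N x + N y)
    (hNhom : ∀ c : ℝ, 0 ≤ c → ∀ x, N (c • x) = c * N x) : ConvexOn ℝ univ N := by
  refine ⟨convex_univ, fun x _ y _ a b ha hb _ => ?_⟩
  simpa only [hNhom a ha, hNhom b hb, smul_eq_mul] using hNadd (a • x) (b • y)

theorem convex_setOf_lt_of_sublinear (hNadd : ∀ x y, N (x + y) ≤ N x + N y)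
    (hNhom : ∀ c : ℝ, 0 ≤ c → ∀ x, N (c • x) = c * N x) (r : ℝ) : Convex ℝ {x | N x < r} := by
  simpa using (convexOn_univ_of_sublinear hNadd hNhom).convex_lt r

theorem zero_mem_setOf_lt_of_homogeneous (hNhom : ∀ c : ℝ, 0 ≤ c → ∀ x, N (c • x) = c * N x)
    {r : ℝ} (hr : 0 < r) : (0 : E) ∈ {x | N x < r} := by
  have hN0 : N 0 = 0 := by simpa using hNhom 0 le_rfl 0
  rwa [mem_ofPred_eq, hN0]

theorem isOpen_setOf_lt_of_sublinear {F : Type*} [NormedAddCommGroup F] [NormedSpace ℝ F]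
    [FiniteDimensional ℝ F] {N : F → ℝ} (hNadd : ∀ x y, N (x + y) ≤ N x + N y)
    (hNhom : ∀ c : ℝ, 0 ≤ c → ∀ x, N (c • x) = c * N x) (r : ℝ) : IsOpen {x | N x < r} := by
  have hcont : ContinuousOn N univ :=
    (convexOn_univ_of_sublinear hNadd hNhom).continuousOn isOpen_univ
  exact isOpen_lt (continuousOn_univ.1 hcont) continuous_const

end Sublinear

section InnerBoundary

variable {n : ℕ} {q : ℝ} {μ : Measure (Fin n → ℝ)} {K : Set (Fin n → ℝ)}

theorem le_mInnerBoundary (hq : q < 0) (hcc : IsComplementedConcave q μ)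
    (hhom : IsHomogeneousMeasure q μ) (hK : MeasurableSet K) (hKfin : μ Kᶜ < ⊤)
    {C : Set (Fin n → ℝ)} (hC : MeasurableSet C) (hCfin : μ C < ⊤) :
    ENNReal.ofReal (-(1 / q)) * μ Kᶜ ^ q * μ C ^ (1 - q) ≤ mInnerBoundary μ K C := by
  rw [← (tendsto_sub_rpow_add_mul_rpow_div hq hCfin.ne (μ Kᶜ ^ q)).liminf_eq]
  refine liminf_le_liminf ?_
  filter_upwards [self_mem_nhdsWithin] with ε (hε : 0 < ε)
  have hinner := hcc.innerMeasure_compl_add_le hhom hq.ne hC.compl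
    (hK.const_smul_of_ne_zero hε.ne') (by rwa [compl_compl])
    (hhom.measure_compl_smul_lt_top hK hKfin hε)
  rw [compl_compl, hhom.measure_compl_smul_rpow hq.ne hK hε] at hinner
  gcongr
  exact (tsub_le_tsub_left hinner _).trans (measure_sub_innerMeasure_compl_le hC _)

theorem mInnerBoundary_compl_smul (hq : q < 0) (hhom : IsHomogeneousMeasure q μ)
    (hK : MeasurableSet K) (hKconv : Convex ℝ K) (hK0 : 0 ∈ K) (hKfin : μ Kᶜ < ⊤)
    {t : ℝ} (ht : 0 < t) :
    mInnerBoundary μ K (t • K)ᶜ =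
      ENNReal.ofReal (-(1 / q)) * μ Kᶜ ^ q * μ (t • K)ᶜ ^ (1 - q) := by
  have htfin := hhom.measure_compl_smul_lt_top hK hKfin ht
  rw [← (tendsto_sub_rpow_add_mul_rpow_div hq htfin.ne (μ Kᶜ ^ q)).liminf_eq, mInnerBoundary,
    mBoundary, compl_compl]
  refine liminf_congr ?_
  filter_upwards [self_mem_nhdsWithin] with ε (hε : 0 < ε)
  have hsub : (t • K + ε • K)ᶜ ⊆ (t • K)ᶜ :=
    compl_subset_compl.2 (subset_add_left _ (zero_mem_smul_set hK0))
  have hmeas : MeasurableSet (t • K + ε • K)ᶜ := by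
    rw [← hKconv.add_smul ht.le hε.le]
    exact (hK.const_smul_of_ne_zero (add_pos ht hε).ne').compl
  rw [← hhom.measure_compl_smul_rpow hq.ne hK hε,
    ← hhom.measure_compl_smul_add_smul hq.ne hK hKconv ht hε, ← compl_sdiff_compl,
    measure_sdiff hsub hmeas.nullMeasurableSet (measure_ne_top_of_subset hsub htfin.ne)]

theorem stmt7_general (hq : q < 0) (hcc : IsComplementedConcave q μ)
    (hhom : IsHomogeneousMeasure q μ) (hK : MeasurableSet K) (hKconv : Convex ℝ K)
    (hK0 : 0 ∈ K) (hKfin : μ Kᶜ < ⊤) :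
    (∀ C : Set (Fin n → ℝ), MeasurableSet C → μ C < ⊤ →
      ENNReal.ofReal (-(1 / q)) * μ Kᶜ ^ q * μ C ^ (1 - q) ≤ mInnerBoundary μ K C) ∧
    (∀ t : ℝ, 0 < t →
      mInnerBoundary μ K (t • K)ᶜ =
        ENNReal.ofReal (-(1 / q)) * μ Kᶜ ^ q * μ (t • K)ᶜ ^ (1 - q)) :=
  ⟨fun _ hC hCfin => le_mInnerBoundary hq hcc hhom hK hKfin hC hCfin,
    fun _ ht => mInnerBoundary_compl_smul hq hhom hK hKconv hK0 hKfin ht⟩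

end InnerBoundary

/-- if `μ` is `q`-complemented concave and `q`-homogeneous with `q < 0`, and
`‖·‖_K` is a semi-norm with open unit ball `K` such that `μ(ℝⁿ∖K) < ∞`, then
`μ⁻_K(C) ≥ -(1/q) μ(ℝⁿ∖K)^q μ(C)^{1-q}`, with equality for `C = ℝⁿ∖(tK)`, `t > 0`. -/
theorem stmt7 (n : ℕ) (hn : 1 ≤ n) (q : ℝ) (hq : q < 0)
    (μ : Measure (Fin n → ℝ))
    (hcc : ∀ lam ∈ Set.Ioo (0 : ℝ) 1, ∀ A B : Set (Fin n → ℝ),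
      MeasurableSet A → MeasurableSet B → μ Aᶜ < ⊤ → μ Bᶜ < ⊤ →
      innerMeasure μ ((lam • A + (1 - lam) • B)ᶜ) ≤
        (ENNReal.ofReal lam * μ Aᶜ ^ q + ENNReal.ofReal (1 - lam) * μ Bᶜ ^ q) ^ (1 / q))
    (hhom : ∀ A : Set (Fin n → ℝ), MeasurableSet A → ∀ c : ℝ, 0 < c →
      μ (c • A) = ENNReal.ofReal (c ^ (1 / q)) * μ A)
    (N : (Fin n → ℝ) → ℝ) (hN0 : ∀ x, 0 ≤ N x)
    (hNadd : ∀ x y, N (x + y) ≤ N x + N y)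
    (hNhom : ∀ c : ℝ, 0 ≤ c → ∀ x, N (c • x) = c * N x)
    (K : Set (Fin n → ℝ)) (hK : K = {x | N x < 1})
    (hKfin : μ Kᶜ < ⊤) :
    (∀ C : Set (Fin n → ℝ), MeasurableSet C → μ C < ⊤ →
      ENNReal.ofReal (-(1 / q)) * μ Kᶜ ^ q * μ C ^ (1 - q) ≤ mInnerBoundary μ K C) ∧
    (∀ t : ℝ, 0 < t →
      mInnerBoundary μ K ((t • K)ᶜ) =
        ENNReal.ofReal (-(1 / q)) * μ Kᶜ ^ q * μ ((t • K)ᶜ) ^ (1 - q)) := by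
  subst hK
  exact stmt7_general hq hcc hhom (isOpen_setOf_lt_of_sublinear hNadd hNhom 1).measurableSet
    (convex_setOf_lt_of_sublinear hNadd hNhom 1) (zero_mem_setOf_lt_of_homogeneous hNhom one_pos)
    hKfin
end

section
/- Let n ≥ 1 and let q ∈ (−∞,0) ∪ (0,1]. If μ₁ and μ₂ are Borel measures on ℝⁿ that are both q-complemented concave, then for all c₁, c₂ > 0 the measure c₁·μ₁ + c₂·μ₂ is q-complemented concave; i.e., the class of q-complemented concave measures on ℝⁿ is a convex cone. -/
open MeasureTheory Set Filter
open scoped Pointwise ENNReal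

/-- A Borel measure `μ` on `ℝⁿ` is `q`-complemented concave (`q`-CC). -/
def IsQCC {n : ℕ} (q : ℝ) (μ : Measure (Fin n → ℝ)) : Prop :=
  ∀ lam ∈ Set.Ioo (0 : ℝ) 1, ∀ A B : Set (Fin n → ℝ),
    MeasurableSet A → MeasurableSet B → μ Aᶜ < ⊤ → μ Bᶜ < ⊤ →
    innerMeasure μ ((lam • A + (1 - lam) • B)ᶜ) ≤
      (ENNReal.ofReal lam * μ Aᶜ ^ q + ENNReal.ofReal (1 - lam) * μ Bᶜ ^ q) ^ (1 / q)

/-!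
The weighted power mean `M(f) = (∑ w i * f i ^ q) ^ (1 / q)` with exponent `q ≤ 1`, `q ≠ 0`, is
superadditive (reverse Minkowski inequality): it is monotone and positively homogeneous, and its
superlevel sets are convex because `x ↦ x ^ q` is convex for `q < 0` and concave for `0 < q ≤ 1`.
As the inner measure is subadditive in the measure, adding the defining inequalities of two
`q`-complemented concave measures gives that of their sum, while homogeneity of `M` takes care of
multiples.
-/

theorem convexOn_rpow_of_nonpos {q : ℝ} (hq : q ≤ 0) :
    ConvexOn ℝ (Ioi 0) fun x : ℝ => x ^ q := by
  refine ⟨convex_Ioi 0, fun x hx y hy s t hs ht hst => ?_⟩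
  rw [mem_Ioi] at hx hy
  simp only [smul_eq_mul]
  calc (s * x + t * y) ^ q ≤ (x ^ s * y ^ t) ^ q :=
        Real.rpow_le_rpow_of_nonpos (by positivity)
          (Real.geom_mean_le_arith_mean2_weighted hs ht hx.le hy.le hst) hq
    _ = (x ^ q) ^ s * (y ^ q) ^ t := by
        rw [Real.mul_rpow (by positivity) (by positivity), ← Real.rpow_mul hx.le,
          ← Real.rpow_mul hy.le, ← Real.rpow_mul hx.le, ← Real.rpow_mul hy.le, mul_comm s,
          mul_comm t]
    _ ≤ s * x ^ q + t * y ^ q :=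
        Real.geom_mean_le_arith_mean2_weighted hs ht (by positivity) (by positivity) hst

theorem ennreal_mul_rpow_of_ne_zero_of_ne_top {c : ℝ≥0∞} (hc0 : c ≠ 0) (hc : c ≠ ⊤) (x : ℝ≥0∞)
    (r : ℝ) : (c * x) ^ r = c ^ r * x ^ r := by
  simp [ENNReal.mul_rpow_eq_ite, hc0, hc]

theorem ennreal_antitone_rpow_of_nonpos {q : ℝ} (hq : q ≤ 0) :
    Antitone fun x : ℝ≥0∞ => x ^ q := by
  intro x y hxy
  have h : (y ^ (-q))⁻¹ ≤ (x ^ (-q))⁻¹ :=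
    ENNReal.inv_le_inv.2 (ENNReal.rpow_le_rpow hxy (neg_nonneg.2 hq))
  simpa only [← ENNReal.rpow_neg, neg_neg] using h

theorem ennreal_convexOn_rpow_of_neg {q : ℝ} (hq : q < 0) :
    ConvexOn ℝ≥0∞ univ fun x : ℝ≥0∞ => x ^ q := by
  refine convexOn_iff_forall_pos.2 ⟨convex_univ, fun x _ y _ s t hs ht hst => ?_⟩
  have hs_top : s ≠ ⊤ := ne_top_of_le_ne_top ENNReal.one_ne_top (hst ▸ le_self_add)
  have ht_top : t ≠ ⊤ := ne_top_of_le_ne_top ENNReal.one_ne_top (hst ▸ le_add_self)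
  simp only [smul_eq_mul]
  rcases eq_or_ne x 0 with rfl | hx
  · simp [ENNReal.zero_rpow_of_neg hq, ENNReal.mul_top hs.ne']
  rcases eq_or_ne y 0 with rfl | hy
  · simp [ENNReal.zero_rpow_of_neg hq, ENNReal.mul_top ht.ne']
  rcases eq_or_ne x ⊤ with rfl | hx_top
  · simp [ENNReal.mul_top hs.ne', ENNReal.top_rpow_of_neg hq]
  rcases eq_or_ne y ⊤ with rfl | hy_top
  · simp [ENNReal.mul_top ht.ne', ENNReal.top_rpow_of_neg hq]
  lift x to NNReal using hx_top
  lift y to NNReal using hy_top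
  lift s to NNReal using hs_top
  lift t to NNReal using ht_top
  norm_cast at hs ht hst hx hy
  have hxy : s * x + t * y ≠ 0 := by positivity
  have h_real := (convexOn_rpow_of_nonpos hq.le).2 (NNReal.coe_pos.2 (pos_iff_ne_zero.2 hx))
    (NNReal.coe_pos.2 (pos_iff_ne_zero.2 hy)) s.coe_nonneg t.coe_nonneg
    (mod_cast hst)
  have h_nnreal : (s * x + t * y) ^ q ≤ s * x ^ q + t * y ^ q := mod_cast h_real
  rw [← ENNReal.coe_rpow_of_ne_zero hx, ← ENNReal.coe_rpow_of_ne_zero hy, ← ENNReal.coe_mul,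
    ← ENNReal.coe_mul, ← ENNReal.coe_add, ← ENNReal.coe_rpow_of_ne_zero hxy]
  exact_mod_cast h_nnreal

theorem ennreal_concaveOn_rpow {q : ℝ} (hq0 : 0 < q) (hq1 : q ≤ 1) :
    ConcaveOn ℝ≥0∞ univ fun x : ℝ≥0∞ => x ^ q := by
  refine ⟨convex_univ, fun x _ y _ s t _ _ hst => ?_⟩
  have h := ENNReal.rpow_arith_mean_le_arith_mean2_rpow s t (x ^ q) (y ^ q) hst
    ((one_le_inv₀ hq0).2 hq1)
  simpa only [smul_eq_mul, ENNReal.rpow_rpow_inv hq0.ne', ENNReal.rpow_inv_le_iff hq0] using h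

theorem map_add_map_le_of_quasiconcaveOn {E : Type*} [AddCommMonoid E] [PartialOrder E]
    [CanonicallyOrderedAdd E] [Module ℝ≥0∞ E] {F : E → ℝ≥0∞} (hF : QuasiconcaveOn ℝ≥0∞ univ F)
    (hmono : Monotone F) (hsmul : ∀ c : ℝ≥0∞, c ≠ 0 → c ≠ ⊤ → ∀ x, F (c • x) = c * F x)
    (x y : E) : F x + F y ≤ F (x + y) := by
  have hx_le : F x ≤ F (x + y) := hmono le_self_add
  have hy_le : F y ≤ F (x + y) := hmono le_add_self
  rcases eq_or_ne (F x) 0 with hx0 | hx0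
  · rwa [hx0, zero_add]
  rcases eq_or_ne (F y) 0 with hy0 | hy0
  · rwa [hy0, add_zero]
  rcases eq_or_ne (F x) ⊤ with hx | hx
  · rwa [hx, top_add, ← hx]
  rcases eq_or_ne (F y) ⊤ with hy | hy
  · rwa [hy, add_top, ← hy]
  -- `x + y` is `F x + F y` times a convex combination of the normalised points `(F x)⁻¹ • x` and
  -- `(F y)⁻¹ • y`, which lie in the convex set `{z | 1 ≤ F z}`.
  have one_le_map_inv_smul {z : E} (hz0 : F z ≠ 0) (hz : F z ≠ ⊤) : 1 ≤ F ((F z)⁻¹ • z) := by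
    rw [hsmul _ (ENNReal.inv_ne_zero.2 hz) (ENNReal.inv_ne_top.2 hz0),
      ENNReal.inv_mul_cancel hz0 hz]
  have h_unit_x := one_le_map_inv_smul hx0 hx
  have h_unit_y := one_le_map_inv_smul hy0 hy
  generalize F x = u at *
  generalize F y = v at *
  have huv0 : u + v ≠ 0 := fun h => hx0 (add_eq_zero.1 h).1
  have huv : u + v ≠ ⊤ := ENNReal.add_ne_top.2 ⟨hx, hy⟩
  have h_weights : u / (u + v) + v / (u + v) = 1 := by
    rw [ENNReal.div_add_div_same, ENNReal.div_self huv0 huv]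
  have h_comb : (u + v) • ((u / (u + v)) • u⁻¹ • x + (v / (u + v)) • v⁻¹ • y) = x + y := by
    simp only [smul_add, smul_smul, ← mul_assoc, ENNReal.mul_div_cancel huv0 huv,
      ENNReal.mul_inv_cancel hx0 hx, ENNReal.mul_inv_cancel hy0 hy, one_smul]
  calc u + v ≤ (u + v) * F ((u / (u + v)) • u⁻¹ • x + (v / (u + v)) • v⁻¹ • y) :=
        le_mul_of_one_le_right' (hF 1 ⟨mem_univ _, h_unit_x⟩ ⟨mem_univ _, h_unit_y⟩
          zero_le zero_le h_weights).2
    _ = F (x + y) := by rw [← hsmul _ huv0 huv, h_comb]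

/-- The power mean `(∑ i ∈ s, w i * f i ^ q) ^ (1 / q)` of exponent `q` with weights `w`, which
appears on the right-hand side of the definition of `q`-complemented concavity. The weights are not
required to sum to `1`. -/
noncomputable def powerMean {ι : Type*} (q : ℝ) (s : Finset ι) (w f : ι → ℝ≥0∞) : ℝ≥0∞ :=
  (∑ i ∈ s, w i * f i ^ q) ^ (1 / q)

section PowerMean

variable {ι : Type*} {q : ℝ} (s : Finset ι) (w : ι → ℝ≥0∞)

theorem powerMean_mono : Monotone (powerMean q s w) := by
  intro f g hfg
  rcases le_total 0 q with hq | hq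
  · exact ENNReal.rpow_le_rpow (by gcongr with i; exact hfg i) (one_div_nonneg.2 hq)
  · refine ennreal_antitone_rpow_of_nonpos (one_div_nonpos.2 hq) ?_
    exact Finset.sum_le_sum fun i _ =>
      mul_le_mul_right (ennreal_antitone_rpow_of_nonpos hq (hfg i)) (w i)

theorem powerMean_smul (hq : q ≠ 0) {c : ℝ≥0∞} (hc0 : c ≠ 0) (hc : c ≠ ⊤) (f : ι → ℝ≥0∞) :
    powerMean q s w (c • f) = c * powerMean q s w f := by
  have hcq0 : c ^ q ≠ 0 := by simp [ENNReal.rpow_eq_zero_iff, hc0, hc]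
  have hcq : c ^ q ≠ ⊤ := by simp [ENNReal.rpow_eq_top_iff, hc0, hc]
  simp only [powerMean, Pi.smul_apply, smul_eq_mul, ennreal_mul_rpow_of_ne_zero_of_ne_top hc0 hc,
    mul_left_comm (w _)]
  rw [← Finset.mul_sum, ennreal_mul_rpow_of_ne_zero_of_ne_top hcq0 hcq, one_div,
    ENNReal.rpow_rpow_inv hq]

theorem convexOn_sum_mul_apply {φ : ℝ≥0∞ → ℝ≥0∞} (hφ : ConvexOn ℝ≥0∞ univ φ) :
    ConvexOn ℝ≥0∞ univ fun f : ι → ℝ≥0∞ => ∑ i ∈ s, w i * φ (f i) := by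
  refine ⟨convex_univ, fun f _ g _ a b ha hb hab => ?_⟩
  simp only [smul_eq_mul, Finset.mul_sum, ← Finset.sum_add_distrib, mul_left_comm _ (w _),
    ← mul_add]
  gcongr with i
  exact hφ.2 trivial trivial ha hb hab

theorem concaveOn_sum_mul_apply {φ : ℝ≥0∞ → ℝ≥0∞} (hφ : ConcaveOn ℝ≥0∞ univ φ) :
    ConcaveOn ℝ≥0∞ univ fun f : ι → ℝ≥0∞ => ∑ i ∈ s, w i * φ (f i) := by
  refine ⟨convex_univ, fun f _ g _ a b ha hb hab => ?_⟩
  simp only [smul_eq_mul, Finset.mul_sum, ← Finset.sum_add_distrib, mul_left_comm _ (w _),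
    ← mul_add]
  gcongr with i
  exact hφ.2 trivial trivial ha hb hab

theorem quasiconcaveOn_powerMean (hq0 : q ≠ 0) (hq1 : q ≤ 1) :
    QuasiconcaveOn ℝ≥0∞ univ (powerMean q s w) := by
  rcases hq0.lt_or_gt with hq | hq
  · exact (convexOn_sum_mul_apply s w (ennreal_convexOn_rpow_of_neg hq)).quasiconvexOn.antitone_comp
      (ennreal_antitone_rpow_of_nonpos (one_div_neg.2 hq).le)
  · exact (concaveOn_sum_mul_apply s w (ennreal_concaveOn_rpow hq hq1)).quasiconcaveOn.monotone_comp
      (ENNReal.monotone_rpow_of_nonneg (one_div_pos.2 hq).le)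

theorem powerMean_add_powerMean_le (hq0 : q ≠ 0) (hq1 : q ≤ 1) (f g : ι → ℝ≥0∞) :
    powerMean q s w f + powerMean q s w g ≤ powerMean q s w (f + g) :=
  map_add_map_le_of_quasiconcaveOn (quasiconcaveOn_powerMean s w hq0 hq1) (powerMean_mono s w)
    (fun _ hc0 hc => powerMean_smul s w hq0 hc0 hc) f g

end PowerMean

section InnerMeasure

variable {α : Type*} [MeasurableSpace α]

theorem innerMeasure_add_le (μ ν : Measure α) (S : Set α) :
    innerMeasure (μ + ν) S ≤ innerMeasure μ S + innerMeasure ν S :=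
  iSup_le fun F => iSup₂_le fun hF hFS =>
    add_le_add (le_iSup₂_of_le F hF (le_iSup_of_le hFS le_rfl))
      (le_iSup₂_of_le F hF (le_iSup_of_le hFS le_rfl))

theorem innerMeasure_smul (c : ℝ≥0∞) (μ : Measure α) (S : Set α) :
    innerMeasure (c • μ) S = c * innerMeasure μ S := by
  simp only [innerMeasure, ENNReal.mul_iSup, Measure.smul_apply, smul_eq_mul]

end InnerMeasure

section IsQCC

variable {n : ℕ} {q : ℝ} {μ ν : Measure (Fin n → ℝ)}

theorem isQCC_iff_le_powerMean :
    IsQCC q μ ↔ ∀ lam ∈ Ioo (0 : ℝ) 1, ∀ A B : Set (Fin n → ℝ),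
      MeasurableSet A → MeasurableSet B → μ Aᶜ < ⊤ → μ Bᶜ < ⊤ →
      innerMeasure μ ((lam • A + (1 - lam) • B)ᶜ) ≤
        powerMean q Finset.univ ![ENNReal.ofReal lam, ENNReal.ofReal (1 - lam)]
          ![μ Aᶜ, μ Bᶜ] := by
  simp only [IsQCC, powerMean, Fin.sum_univ_two, Matrix.cons_val_zero, Matrix.cons_val_one]

theorem IsQCC.smul (hq : q ≠ 0) (hμ : IsQCC q μ) {c : ℝ≥0∞} (hc0 : c ≠ 0) (hc : c ≠ ⊤) :
    IsQCC q (c • μ) := by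
  rw [isQCC_iff_le_powerMean] at hμ ⊢
  intro lam hlam A B hA hB hA_fin hB_fin
  simp only [Measure.smul_apply, smul_eq_mul] at hA_fin hB_fin
  calc innerMeasure (c • μ) (lam • A + (1 - lam) • B)ᶜ
      = c * innerMeasure μ (lam • A + (1 - lam) • B)ᶜ := innerMeasure_smul c μ _
    _ ≤ c * powerMean q Finset.univ _ ![μ Aᶜ, μ Bᶜ] := by
        gcongr
        exact hμ lam hlam A B hA hB (ENNReal.lt_top_of_mul_ne_top_right hA_fin.ne hc0)
          (ENNReal.lt_top_of_mul_ne_top_right hB_fin.ne hc0)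
    _ = powerMean q Finset.univ _ ![(c • μ) Aᶜ, (c • μ) Bᶜ] := by
        simp only [← powerMean_smul _ _ hq hc0 hc, Matrix.smul_cons, Matrix.smul_empty,
          Measure.smul_apply]

theorem IsQCC.add (hq0 : q ≠ 0) (hq1 : q ≤ 1) (hμ : IsQCC q μ) (hν : IsQCC q ν) :
    IsQCC q (μ + ν) := by
  rw [isQCC_iff_le_powerMean] at hμ hν ⊢
  intro lam hlam A B hA hB hA_fin hB_fin
  rw [Measure.add_apply, ENNReal.add_lt_top] at hA_fin hB_fin
  calc innerMeasure (μ + ν) (lam • A + (1 - lam) • B)ᶜ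
      ≤ innerMeasure μ (lam • A + (1 - lam) • B)ᶜ +
          innerMeasure ν (lam • A + (1 - lam) • B)ᶜ := innerMeasure_add_le μ ν _
    _ ≤ powerMean q Finset.univ _ ![μ Aᶜ, μ Bᶜ] + powerMean q Finset.univ _ ![ν Aᶜ, ν Bᶜ] :=
        add_le_add (hμ lam hlam A B hA hB hA_fin.1 hB_fin.1)
          (hν lam hlam A B hA hB hA_fin.2 hB_fin.2)
    _ ≤ powerMean q Finset.univ _ (![μ Aᶜ, μ Bᶜ] + ![ν Aᶜ, ν Bᶜ]) :=
        powerMean_add_powerMean_le _ _ hq0 hq1 _ _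
    _ = powerMean q Finset.univ _ ![(μ + ν) Aᶜ, (μ + ν) Bᶜ] := by
        simp only [Matrix.cons_add_cons, Matrix.empty_add_empty, Measure.add_apply]

end IsQCC

/-- for `q ∈ (-∞,0) ∪ (0,1]`, the class of `q`-complemented concave measures
on `ℝⁿ` is a convex cone: positive combinations of `q`-CC measures are `q`-CC. -/
theorem stmt8 (n : ℕ) (hn : 1 ≤ n) (q : ℝ) (hq : q ∈ Set.Iio (0 : ℝ) ∪ Set.Ioc (0 : ℝ) 1)
    (μ₁ μ₂ : Measure (Fin n → ℝ)) (h₁ : IsQCC q μ₁) (h₂ : IsQCC q μ₂)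
    (c₁ c₂ : ℝ) (hc₁ : 0 < c₁) (hc₂ : 0 < c₂) :
    IsQCC q (ENNReal.ofReal c₁ • μ₁ + ENNReal.ofReal c₂ • μ₂) := by
  have hq0 : q ≠ 0 := hq.elim (fun h => h.ne) fun h => h.1.ne'
  have hq1 : q ≤ 1 := hq.elim (fun h => h.le.trans zero_le_one) fun h => h.2
  have h_smul {μ : Measure (Fin n → ℝ)} (hμ : IsQCC q μ) {c : ℝ} (hc : 0 < c) :
      IsQCC q (ENNReal.ofReal c • μ) :=
    hμ.smul hq0 (ENNReal.ofReal_pos.2 hc).ne' ENNReal.ofReal_ne_top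
  exact (h_smul h₁ hc₁).add hq0 hq1 (h_smul h₂ hc₂)
end

section
/- Let n ≥ 1 and q ∈ ℝ∖{0}. If μ is a nonzero Borel measure on ℝⁿ that is q-complemented concave, then μ(ℝⁿ) = ∞. -/
open MeasureTheory Set Filter
open scoped Pointwise ENNReal

/-!
Suppose `0 < μ(E) < ∞` and fix a ball `B` of positive measure, so that `μ(Bᶜ) < μ(E)`. The sets
`{x}` and `B` have complements of measure at most `μ(E)` and strictly less than `μ(E)`, so the
inner measure of `(t{x} + (1 - t)B)ᶜ` is at most a weighted `q`-mean of `μ(E)` and `μ(Bᶜ)`, which is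
smaller than `μ(E)` by an amount independent of `x`. As `x` goes to infinity the bounded set
`t{x} + (1 - t)B` leaves every ball, so these inner measures tend to `μ(E)`: a contradiction.
-/

theorem le_innerMeasure {α : Type*} [MeasurableSpace α] (μ : Measure α) {F S : Set α}
    (hF : MeasurableSet F) (hFS : F ⊆ S) : μ F ≤ innerMeasure μ S :=
  le_iSup_of_le F (le_iSup_of_le hF (le_iSup_of_le hFS le_rfl))

theorem ennreal_rpow_strictAnti {q : ℝ} (hq : q < 0) : StrictAnti fun x : ℝ≥0∞ => x ^ q := by
  intro x y hxy
  have h : x ^ (-q) < y ^ (-q) := ENNReal.rpow_lt_rpow hxy (neg_pos.2 hq)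
  simpa only [ENNReal.rpow_neg, ENNReal.inv_lt_inv] using h

/-- The power mean of exponent `q` of `a` and `b`, with weights `t` and `1 - t`; it appears on the
right-hand side of the `q`-complemented concavity inequality. -/
noncomputable def weightedPowerMean (q t : ℝ) (a b : ℝ≥0∞) : ℝ≥0∞ :=
  (ENNReal.ofReal t * a ^ q + ENNReal.ofReal (1 - t) * b ^ q) ^ (1 / q)

section weightedPowerMean

variable {q t : ℝ} {a b : ℝ≥0∞}

theorem weightedPowerMean_mono_left (q t : ℝ) (b : ℝ≥0∞) :
    Monotone fun a => weightedPowerMean q t a b := by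
  intro a a' ha
  simp only [weightedPowerMean]
  rcases lt_trichotomy q 0 with hq | rfl | hq
  · refine (ennreal_rpow_strictAnti (one_div_neg.2 hq)).antitone ?_
    gcongr ENNReal.ofReal t * ?_ + _
    exact (ennreal_rpow_strictAnti hq).antitone ha
  · simp only [ENNReal.rpow_zero, le_refl]
  · gcongr

theorem weightedPowerMean_self (hq : q ≠ 0) (ht : t ∈ Icc (0 : ℝ) 1) (a : ℝ≥0∞) :
    weightedPowerMean q t a a = a := by
  have hweights : ENNReal.ofReal t + ENNReal.ofReal (1 - t) = 1 := by
    rw [← ENNReal.ofReal_add ht.1 (sub_nonneg.2 ht.2), add_sub_cancel, ENNReal.ofReal_one]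
  rw [weightedPowerMean, ← add_mul, hweights, one_mul, one_div, ENNReal.rpow_rpow_inv hq]

theorem weightedPowerMean_strictMono_right (hq : q ≠ 0) (ht : t < 1) (ha₀ : a ≠ 0) (ha : a ≠ ⊤) :
    StrictMono fun b => weightedPowerMean q t a b := by
  intro b b' hb
  have hweight : ENNReal.ofReal (1 - t) ≠ 0 := (ENNReal.ofReal_pos.2 (sub_pos.2 ht)).ne'
  have hfirst : ENNReal.ofReal t * a ^ q ≠ ⊤ :=
    ENNReal.mul_ne_top ENNReal.ofReal_ne_top (ENNReal.rpow_ne_top_of_ne_zero ha₀ ha)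
  have hsum {c d : ℝ≥0∞} (hcd : c < d) :
      ENNReal.ofReal t * a ^ q + ENNReal.ofReal (1 - t) * c <
        ENNReal.ofReal t * a ^ q + ENNReal.ofReal (1 - t) * d :=
    ENNReal.add_lt_add_left hfirst
      (ENNReal.mul_lt_mul_right hweight ENNReal.ofReal_ne_top hcd)
  rcases hq.lt_or_gt with hq | hq
  · exact ennreal_rpow_strictAnti (one_div_neg.2 hq) (hsum (ennreal_rpow_strictAnti hq hb))
  · exact ENNReal.rpow_lt_rpow (hsum (ENNReal.rpow_lt_rpow hb hq)) (one_div_pos.2 hq)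

theorem weightedPowerMean_lt_left (hq : q ≠ 0) (ht : t ∈ Ico (0 : ℝ) 1) (ha : a ≠ ⊤)
    (hba : b < a) : weightedPowerMean q t a b < a :=
  calc weightedPowerMean q t a b < weightedPowerMean q t a a :=
        weightedPowerMean_strictMono_right hq ht.2 hba.ne_bot ha hba
    _ = a := weightedPowerMean_self hq (Ico_subset_Icc_self ht) a

end weightedPowerMean

section ClosedBall

variable {X : Type*} [PseudoMetricSpace X] [MeasurableSpace X] {μ : Measure X}

theorem iSup_measure_closedBall_nat (μ : Measure X) (x : X) :
    ⨆ k : ℕ, μ (Metric.closedBall x k) = μ univ := by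
  have hmono : Monotone fun k : ℕ => Metric.closedBall x (k : ℝ) := fun _ _ hkl =>
    Metric.closedBall_subset_closedBall (Nat.cast_le.2 hkl)
  rw [← Metric.iUnion_closedBall_nat x, hmono.measure_iUnion]

theorem exists_measure_compl_closedBall_lt [OpensMeasurableSpace X] [IsFiniteMeasure μ]
    (hμ : 0 < μ univ) (x : X) : ∃ k : ℕ, μ (Metric.closedBall x k)ᶜ < μ univ := by
  rw [← iSup_measure_closedBall_nat μ x, lt_iSup_iff] at hμ
  obtain ⟨k, hk⟩ := hμ
  refine ⟨k, ?_⟩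
  rw [measure_compl Metric.isClosed_closedBall.measurableSet (measure_ne_top μ _)]
  exact ENNReal.sub_lt_self (measure_ne_top μ _) (hk.trans_le (measure_mono (subset_univ _))).ne'
    hk.ne'

end ClosedBall

section NormedSpace

variable {E : Type*} [NormedAddCommGroup E] [NormedSpace ℝ E]

theorem exists_disjoint_smul_singleton_add [Nontrivial E] {S B : Set E}
    (hS : Bornology.IsBounded S) (hB : Bornology.IsBounded B) {t : ℝ} (ht : t ≠ 0) :
    ∃ x : E, Disjoint S (t • {x} + B) := by
  obtain ⟨y, hy⟩ : ∃ y, y ∉ S - B := by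
    rw [← ne_univ_iff_exists_notMem]
    exact fun h => NormedSpace.unbounded_univ ℝ E (h ▸ hS.sub hB)
  refine ⟨t⁻¹ • y, ?_⟩
  rw [smul_set_singleton, smul_inv_smul₀ ht, disjoint_left]
  rintro _ hs ⟨_, rfl, b, hb, rfl⟩
  exact hy ⟨_, hs, b, hb, add_sub_cancel_right _ _⟩

variable [MeasurableSpace E] {q t : ℝ} {μ : Measure E}

/-- The `q`-complemented concavity inequality for the single weight `t`. It is required of nonempty
sets only: comparing the whole space with the empty set, as `IsQCC` allows, would bound the total
mass without any use of the geometry of the space. -/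
def IsQCCAt (q t : ℝ) (μ : Measure E) : Prop :=
  ∀ A B : Set E, A.Nonempty → B.Nonempty → MeasurableSet A → MeasurableSet B →
    μ Aᶜ < ⊤ → μ Bᶜ < ⊤ →
    innerMeasure μ (t • A + (1 - t) • B)ᶜ ≤ weightedPowerMean q t (μ Aᶜ) (μ Bᶜ)

theorem IsQCC.isQCCAt {n : ℕ} {μ : Measure (Fin n → ℝ)} (h : IsQCC q μ)
    (ht : t ∈ Ioo (0 : ℝ) 1) : IsQCCAt q t μ :=
  fun A B _ _ => h t ht A B

variable [Nontrivial E] [OpensMeasurableSpace E]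

theorem IsQCCAt.measure_univ_le [IsFiniteMeasure μ] (h : IsQCCAt q t μ) (ht : t ≠ 0) {B : Set E}
    (hB : MeasurableSet B) (hBne : B.Nonempty) (hBbdd : Bornology.IsBounded B) :
    μ univ ≤ weightedPowerMean q t (μ univ) (μ Bᶜ) := by
  refine (iSup_measure_closedBall_nat μ 0).ge.trans (iSup_le fun k => ?_)
  obtain ⟨x, hx⟩ := exists_disjoint_smul_singleton_add
    (Metric.isBounded_closedBall (x := (0 : E)) (r := k)) (hBbdd.smul₀ (1 - t)) ht
  calc μ (Metric.closedBall 0 k)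
      ≤ innerMeasure μ (t • {x} + (1 - t) • B)ᶜ :=
        le_innerMeasure μ Metric.isClosed_closedBall.measurableSet hx.subset_compl_right
    _ ≤ weightedPowerMean q t (μ {x}ᶜ) (μ Bᶜ) :=
        h {x} B (singleton_nonempty x) hBne (measurableSet_singleton x) hB
          (measure_lt_top μ _) (measure_lt_top μ _)
    _ ≤ weightedPowerMean q t (μ univ) (μ Bᶜ) :=
        weightedPowerMean_mono_left q t _ (measure_mono (subset_univ _))

theorem stmt9_general (hq : q ≠ 0) (ht : t ∈ Ioo (0 : ℝ) 1) (hμcc : IsQCCAt q t μ)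
    (hμne : 0 < μ univ) : μ univ = ⊤ := by
  by_contra hfin
  have : IsFiniteMeasure μ := ⟨lt_top_iff_ne_top.2 hfin⟩
  obtain ⟨k, hk⟩ := exists_measure_compl_closedBall_lt hμne (0 : E)
  have hle : μ univ ≤ weightedPowerMean q t (μ univ) (μ (Metric.closedBall 0 k)ᶜ) :=
    hμcc.measure_univ_le ht.1.ne' Metric.isClosed_closedBall.measurableSet
      (Metric.nonempty_closedBall.2 k.cast_nonneg) Metric.isBounded_closedBall
  exact hle.not_gt (weightedPowerMean_lt_left hq (Ioo_subset_Ico_self ht) hfin hk)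

end NormedSpace

/-- any nonzero `q`-complemented concave measure on `ℝⁿ` (`q ≠ 0`) has
infinite total mass. -/
theorem stmt9 (n : ℕ) (hn : 1 ≤ n) (q : ℝ) (hq : q ≠ 0)
    (μ : Measure (Fin n → ℝ)) (hμcc : IsQCC q μ) (hμne : 0 < μ Set.univ) :
    μ Set.univ = ⊤ := by
  have : NeZero n := ⟨Nat.one_le_iff_ne_zero.1 hn⟩
  have half_mem : (1 / 2 : ℝ) ∈ Ioo (0 : ℝ) 1 := ⟨one_half_pos, one_half_lt_one⟩
  exact stmt9_general hq half_mem (hμcc.isQCCAt half_mem) hμne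
end
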